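/- For any pair of discrete random variables (X, Y) with X uniform on {0,1} and Y taking values in a finite alphabet, the Bhattacharyya parameter satisfies Z(X|Y) ≥ H(X|Y), where H is the conditional Shannon entropy in bits. -/

import Mathlib

open Finset

/-- Conditional Shannon entropy (in bits) of `X` given `Y`, for a joint pmf `p`. -/
noncomputable def condEnt {α β : Type} [Fintype α] [Fintype β] (p : α → β → ℝ) : ℝ :=
  -∑ y : β, ∑ x : α, p x y * Real.logb 2 (p x y / ∑ x' : α, p x' y)

/-- Bhattacharyya parameter `Z(X|Y) = ∑_y √(P(y|0)·P(y|1))` for `X` uniform on `{0,1}`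
with joint pmf `p` (so `P(y|x) = 2·p x y`). -/
noncomputable def bhat {β : Type} [Fintype β] (p : Bool → β → ℝ) : ℝ :=
  ∑ y : β, Real.sqrt ((2 * p false y) * (2 * p true y))

lemma aux_jensen (x : ℝ) (h0 : 0 < x) (h1 : x ≤ 1) :
    (1 - x) * Real.log (1 + x) + x * Real.log x ≤ 0 := by
  have hc := strictConcaveOn_log_Ioi.concaveOn.2 (show (1 + x) ∈ Set.Ioi (0:ℝ) by
    simp only [Set.mem_Ioi]; linarith) (show x ∈ Set.Ioi (0:ℝ) from h0)
    (show (0:ℝ) ≤ 1 - x by linarith) h0.le (by ring)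
  simp only [smul_eq_mul] at hc
  have : (1 - x) * (1 + x) + x * x = 1 := by ring
  rw [this, Real.log_one] at hc
  exact hc

lemma aux_mono (w : ℝ) (h0 : 0 < w) (h1 : w ≤ 1) :
    (1 / w + w) * Real.log (1 + w ^ 2) - 2 * w * Real.log w ≤ 2 * Real.log 2 := by
  have hd : ∀ z : ℝ, 0 < z → HasDerivAt
      (fun w : ℝ => (w⁻¹ + w) * Real.log (1 + w ^ 2) - 2 * (w * Real.log w))
      ((-(z ^ 2)⁻¹ + 1) * Real.log (1 + z ^ 2) + (z⁻¹ + z) * ((2 * z) / (1 + z ^ 2))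
        - 2 * (Real.log z + 1)) z := by
    intro z hz
    have e1 : HasDerivAt (fun w : ℝ => 1 + w ^ 2) (2 * z) z := by
      simpa using (hasDerivAt_pow 2 z).const_add 1
    have e2 := e1.log (by positivity)
    have e3 := (hasDerivAt_inv hz.ne').add (hasDerivAt_id z)
    exact (e3.mul e2).sub ((Real.hasDerivAt_mul_log hz.ne').const_mul 2)
  have hm : MonotoneOn (fun w : ℝ => (w⁻¹ + w) * Real.log (1 + w ^ 2) - 2 * (w * Real.log w))
      (Set.Ioc 0 1) := by
    apply monotoneOn_of_deriv_nonneg (convex_Ioc 0 1)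
    · intro z hz
      exact (hd z hz.1).continuousAt.continuousWithinAt
    · intro z hz
      rw [interior_Ioc] at hz
      exact (hd z hz.1).differentiableAt.differentiableWithinAt
    · intro z hz
      rw [interior_Ioc] at hz
      rw [(hd z hz.1).deriv]
      have hz0 : 0 < z := hz.1
      have hj := aux_jensen (z ^ 2) (by positivity) (by nlinarith [hz.2])
      rw [Real.log_pow] at hj
      push_cast at hj
      have : (-(z ^ 2)⁻¹ + 1) * Real.log (1 + z ^ 2) + (z⁻¹ + z) * ((2 * z) / (1 + z ^ 2))
        - 2 * (Real.log z + 1)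
        = (z ^ 2)⁻¹ * -((1 - z ^ 2) * Real.log (1 + z ^ 2) + z ^ 2 * (2 * Real.log z)) := by
        field_simp
        ring
      rw [this]
      exact mul_nonneg (by positivity) (by linarith)
  have := hm ⟨h0, h1⟩ ⟨one_pos, le_refl 1⟩ h1
  norm_num at this
  rw [one_div]
  linarith

lemma aux_pos (s q : ℝ) (hs : 0 < s) (hsq : s ≤ q) :
    -(s ^ 2 * Real.log (s ^ 2 / (s ^ 2 + q ^ 2)) + q ^ 2 * Real.log (q ^ 2 / (s ^ 2 + q ^ 2)))
      ≤ 2 * (s * q) * Real.log 2 := by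
  have hq : 0 < q := by linarith
  have h := aux_mono (s / q) (by positivity) ((div_le_one hq).2 hsq)
  have e : 1 + (s / q) ^ 2 = (s ^ 2 + q ^ 2) / q ^ 2 := by field_simp; ring
  rw [e, Real.log_div (by positivity) (by positivity), Real.log_div hs.ne' hq.ne',
    Real.log_pow] at h
  rw [Real.log_div (by positivity) (by positivity), Real.log_div (by positivity) (by positivity),
    Real.log_pow, Real.log_pow]
  push_cast at *
  have h2 := mul_le_mul_of_nonneg_left h (show 0 ≤ s * q by positivity)
  have e2 : s * q * ((1 / (s / q) + s / q) * (Real.log (s ^ 2 + q ^ 2) - 2 * Real.log q)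
      - 2 * (s / q) * (Real.log s - Real.log q))
      = -(s ^ 2 * (2 * Real.log s - Real.log (s ^ 2 + q ^ 2))
        + q ^ 2 * (2 * Real.log q - Real.log (s ^ 2 + q ^ 2))) := by
    field_simp
    ring
  rw [e2] at h2
  linarith

lemma aux_sym (s q : ℝ) (hs : 0 ≤ s) (hq : 0 ≤ q) :
    -(s ^ 2 * Real.log (s ^ 2 / (s ^ 2 + q ^ 2)) + q ^ 2 * Real.log (q ^ 2 / (s ^ 2 + q ^ 2)))
      ≤ 2 * (s * q) * Real.log 2 := by
  rcases hs.eq_or_lt with rfl | hs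
  · rcases hq.eq_or_lt with rfl | hq
    · simp
    · simp [hq.ne']
  rcases hq.eq_or_lt with rfl | hq
  · simp [hs.ne']
  rcases le_total s q with h | h
  · exact aux_pos s q hs h
  · have := aux_pos q s hq h
    rw [add_comm (q ^ 2) (s ^ 2)] at this
    linarith

lemma aux_term (a b : ℝ) (ha : 0 ≤ a) (hb : 0 ≤ b) :
    -(a * Real.logb 2 (a / (a + b)) + b * Real.logb 2 (b / (a + b)))
      ≤ Real.sqrt ((2 * b) * (2 * a)) := by
  have h := aux_sym (√a) (√b) (Real.sqrt_nonneg _) (Real.sqrt_nonneg _)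
  rw [Real.sq_sqrt ha, Real.sq_sqrt hb] at h
  have e : Real.sqrt ((2 * b) * (2 * a)) = 2 * (√a * √b) := by
    rw [← Real.sqrt_mul ha, show (2 * b) * (2 * a) = 2 ^ 2 * (a * b) by ring,
      Real.sqrt_mul (by positivity), Real.sqrt_sq (by norm_num)]
  have hl : 0 < Real.log 2 := Real.log_pos (by norm_num)
  rw [e, Real.logb, Real.logb, ← mul_le_mul_iff_left₀ hl]
  refine le_trans (le_of_eq ?_) h
  field_simp

/-- `Z(X|Y) ≥ H(X|Y)` for `X` uniform on `{0,1}`. -/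
theorem condEnt_le_bhat {β : Type} [Fintype β] (p : Bool → β → ℝ)
    (hp : ∀ x y, 0 ≤ p x y)
    (hsum : ∑ x : Bool, ∑ y : β, p x y = 1)
    (hunif : ∀ x : Bool, ∑ y : β, p x y = 1 / 2) :
    condEnt p ≤ bhat p := by
  unfold condEnt bhat
  rw [← Finset.sum_neg_distrib]
  apply Finset.sum_le_sum
  intro y _
  simp only [Fintype.sum_bool]
  exact aux_term _ _ (hp _ _) (hp _ _)
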